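/- arXiv:2203.12492 — 2 statements merged into one kernel-verified Lean document; each statement's English description precedes it below -/
import Mathlib

section
/- For all integers d ≥ 1 and r ≥ 0, every balanced shifted tableau B ∈ BS(Z(d,r)) and every 1 ≤ i ≤ d, one has B(i,0) < B(i,1) < B(i,2) < ⋯ < B(i,r). -/
open scoped BigOperators

namespace BST

/-- `lam` (1-indexed, with `d` parts) is a strict partition: strictly decreasing
positive parts `lam 1 > lam 2 > ⋯ > lam d > 0`. -/
def IsStrictPartition (d : ℕ) (lam : ℕ → ℕ) : Prop :=
  (∀ i : ℕ, 1 ≤ i → i < d → lam (i + 1) < lam i) ∧ 1 ≤ lam d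

/-- The size `|λ| = λ_1 + ⋯ + λ_d`. -/
def sizeP (d : ℕ) (lam : ℕ → ℕ) : ℕ := ∑ i ∈ Finset.Icc 1 d, lam i

/-- The shifted diagram `D(λ) ⊆ ℤ × ℤ`: row `i` (1 ≤ i ≤ d) occupies columns
`i - d, …, λ_i + i - d - 1`. -/
def Diagram (d : ℕ) (lam : ℕ → ℕ) : Set (ℤ × ℤ) :=
  {p : ℤ × ℤ | 1 ≤ p.1 ∧ p.1 ≤ (d : ℤ) ∧ p.1 - (d : ℤ) ≤ p.2 ∧
    p.2 + (d : ℤ) + 1 ≤ (lam p.1.toNat : ℤ) + p.1}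

/-- The hook `H(i,c)`. -/
def Hook (d : ℕ) (lam : ℕ → ℕ) (i c : ℤ) : Set (ℤ × ℤ) :=
  {(i, c)} ∪ {p ∈ Diagram d lam | (p.1 = i ∧ c < p.2) ∨ (p.2 = c ∧ i < p.1)} ∪
    {p ∈ Diagram d lam | c < 0 ∧ p.1 = (d : ℤ) + 1 + c}

/-- The extended hook `H̃(i,c)`. -/
def ExtHook (d : ℕ) (lam : ℕ → ℕ) (i c : ℤ) : Set (ℤ × ℤ) :=
  Hook d lam i c ∪ {p : ℤ × ℤ | c < 0 ∧ p = ((d : ℤ) + 1 + c, c)}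

/-- The extended diagram `D(λ) ∪ {(i, i - d - 1) : 1 ≤ i ≤ d}`. -/
def ExtDiagram (d : ℕ) (lam : ℕ → ℕ) : Set (ℤ × ℤ) :=
  Diagram d lam ∪ {p : ℤ × ℤ | 1 ≤ p.1 ∧ p.1 ≤ (d : ℤ) ∧ p.2 = p.1 - ((d : ℤ) + 1)}

/-- The extended filling `B̃`, with `B̃(i, i - d - 1) = B(i, 0)`. -/
def ExtFilling (d : ℕ) (B : ℤ × ℤ → ℕ) : ℤ × ℤ → ℕ :=
  fun p => if p.2 = p.1 - ((d : ℤ) + 1) then B (p.1, 0) else B p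

/-- The rank function `rk(i,c)`. -/
def rk (d : ℕ) (lam : ℕ → ℕ) (i c : ℤ) : ℤ :=
  if 0 ≤ c then (lam i.toNat : ℤ) - d + i - c
  else (lam i.toNat : ℤ) - d + i + (lam ((d : ℤ) + 1 + c).toNat : ℤ) + c + 1

/-- A bijective filling of `D(λ)` with `1, …, |λ|` (normalized to be `0` off the diagram). -/
def IsFilling (d : ℕ) (lam : ℕ → ℕ) (B : ℤ × ℤ → ℕ) : Prop :=
  Set.BijOn B (Diagram d lam) (Set.Icc 1 (sizeP d lam)) ∧
    ∀ p : ℤ × ℤ, p ∉ Diagram d lam → B p = 0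

/-- A balanced shifted tableau: a bijective filling such that at each box `(i,c)`,
`B(i,c)` is the `rk(i,c)`-th largest entry of the multiset of values of `B̃` on the
extended hook, i.e. exactly `rk(i,c) - 1` boxes of the extended hook carry a value
strictly larger than `B(i,c)`. -/
def IsBalanced (d : ℕ) (lam : ℕ → ℕ) (B : ℤ × ℤ → ℕ) : Prop :=
  IsFilling d lam B ∧ ∀ p ∈ Diagram d lam,
    ({q ∈ ExtHook d lam p.1 p.2 | B p < ExtFilling d B q}.ncard : ℤ) =
      rk d lam p.1 p.2 - 1

/-- A standard Young tableau of shifted shape `λ`. -/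
def IsSYT (d : ℕ) (lam : ℕ → ℕ) (B : ℤ × ℤ → ℕ) : Prop :=
  IsFilling d lam B ∧ ∀ p ∈ Diagram d lam, ∀ q ∈ Diagram d lam,
    ((p.1 = q.1 ∧ p.2 < q.2) → B p < B q) ∧ ((p.2 = q.2 ∧ p.1 < q.1) → B p < B q)

/-- The simple reflections of `W(B_n)`, acting on `ℤ`: `s 0` swaps `1 ↔ -1`,
and `s a` (for `a ≥ 1`) swaps `a ↔ a+1` and `-a ↔ -(a+1)`. -/
def sB (a : ℕ) : Equiv.Perm ℤ :=
  if a = 0 then Equiv.swap 1 (-1)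
  else Equiv.swap (a : ℤ) ((a : ℤ) + 1) * Equiv.swap (-(a : ℤ)) (-(a : ℤ) - 1)

/-- The product `s_{a_1} s_{a_2} ⋯ s_{a_m}` of a word. -/
def wordProd (L : List ℕ) : Equiv.Perm ℤ := (L.map sB).prod

/-- A signed permutation in `W(B_n)`: odd, and the identity beyond `n`. -/
def IsSignedPerm (n : ℕ) (w : Equiv.Perm ℤ) : Prop :=
  (∀ i : ℤ, w (-i) = -(w i)) ∧ ∀ i : ℤ, (n : ℤ) < |i| → w i = i

/-- The Coxeter length of `w` in `W(B_n)`. -/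
noncomputable def lengthB (n : ℕ) (w : Equiv.Perm ℤ) : ℕ :=
  sInf {m : ℕ | ∃ L : List ℕ, (∀ a ∈ L, a < n) ∧ wordProd L = w ∧ L.length = m}

/-- `L` is a reduced word of `w` in `W(B_n)`. -/
def IsReducedWord (n : ℕ) (w : Equiv.Perm ℤ) (L : List ℕ) : Prop :=
  (∀ a ∈ L, a < n) ∧ wordProd L = w ∧ L.length = lengthB n w

/-- The vector `e_k` (for `k ≥ 1` the `k`-th standard basis vector, with the
conventions `e 0 = 0` and `e (-k) = - e k`), represented as an odd function `ℤ → ℤ`. -/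
def eVec (k : ℤ) : ℤ → ℤ :=
  fun t => if t = 0 then 0 else if t = k then 1 else if t = -k then -1 else 0

/-- The positive roots of type `B_n`. -/
def PosRoots (n : ℕ) : Set (ℤ → ℤ) :=
  {v | (∃ i j : ℤ, 1 ≤ i ∧ i < j ∧ j ≤ (n : ℤ) ∧
        (v = eVec j - eVec i ∨ v = eVec j + eVec i)) ∨
       (∃ i : ℤ, 1 ≤ i ∧ i ≤ (n : ℤ) ∧ v = eVec i)}

/-- The action of a signed permutation on vectors: `w · e_i = e_{w(i)}`. -/
def actB (w : Equiv.Perm ℤ) (v : ℤ → ℤ) : ℤ → ℤ := fun t => v (w⁻¹ t)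

/-- The inversion set `Inv(w) = {α ∈ Φ⁺ : w⁻¹ · α ∈ -Φ⁺}`. -/
def InvSet (n : ℕ) (w : Equiv.Perm ℤ) : Set (ℤ → ℤ) :=
  {α | α ∈ PosRoots n ∧ -(actB w⁻¹ α) ∈ PosRoots n}

/-- The simple roots: `α_0 = e_1` and `α_a = e_{a+1} - e_a` for `a ≥ 1`. -/
def alphaRoot (a : ℕ) : ℤ → ℤ :=
  if a = 0 then eVec 1 else eVec ((a : ℤ) + 1) - eVec (a : ℤ)

/-- The reflection order of a word: `reflOrder L t = γ_{t+1} = s_{a_1} ⋯ s_{a_t} · α_{a_{t+1}}`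
(0-indexed). -/
def reflOrder (L : List ℕ) (t : ℕ) : ℤ → ℤ :=
  actB (wordProd (L.take t)) (alphaRoot (L.getD t 0))

/-- The trapezoid `Z(d,r) = (r+2d-1, r+2d-3, …, r+1)`. -/
def Zlam (d r : ℕ) : ℕ → ℕ := fun i => r + 2 * d + 1 - 2 * i

/-- The labeling `f : D(Z(d,r)) → Φ⁺`. -/
def fLabel (d r : ℕ) (p : ℤ × ℤ) : ℤ → ℤ :=
  if p.2 ≤ 0 then eVec ((d : ℤ) + 1 - p.1) - eVec p.2
  else if p.2 ≤ (r : ℤ) then eVec ((d : ℤ) + 1 - p.1) + eVec (p.2 + (d : ℤ))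
  else eVec ((d : ℤ) + 1 - p.1) - eVec (p.2 - (r : ℤ))

/-- The extended labeling `f̃`, with `f̃(i, i - d - 1) = 2 e_{d+1-i}`. -/
def fExtLabel (d r : ℕ) (p : ℤ × ℤ) : ℤ → ℤ :=
  if p.2 = p.1 - ((d : ℤ) + 1) then (2 : ℤ) • eVec ((d : ℤ) + 1 - p.1)
  else fLabel d r p

/-- `w` is the signed permutation `w^{(d,r)} ∈ W(B_{d+r})`, i.e.
`w(i) = d + i` for `1 ≤ i ≤ r` and `w(i) = -(i - r)` for `r < i ≤ d + r`. -/
def IsWdr (d r : ℕ) (w : Equiv.Perm ℤ) : Prop :=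
  IsSignedPerm (d + r) w ∧
    (∀ i : ℤ, 1 ≤ i → i ≤ (r : ℤ) → w i = (d : ℤ) + i) ∧
    (∀ i : ℤ, (r : ℤ) < i → i ≤ (d : ℤ) + (r : ℤ) → w i = -(i - r))


/-- `x` lies strictly between `y` and `z` (i.e. `min(y,z) < x < max(y,z)`). -/
def Between (x y z : ℕ) : Prop := (y < x ∧ x < z) ∨ (z < x ∧ x < y)

/-- A nonempty list is unimodal: strictly decreasing down to its minimum
(at 0-indexed position `k`), then strictly increasing. -/
def Unimodal (L : List ℕ) : Prop :=
  ∃ k : ℕ, k < L.length ∧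
    (∀ a b : ℕ, a < b → b ≤ k → L.getD b 0 < L.getD a 0) ∧
    (∀ a b : ℕ, k ≤ a → a < b → b < L.length → L.getD a 0 < L.getD b 0)

/-- Row `i` of the distinguished tableau of shape `Z(d,r)`:
`(r+d-i, …, r+1, 0, 1, …, r+d-i)`. -/
def rowWord (d r i : ℕ) : List ℕ :=
  (List.range (r + 2 * (d - i) + 1)).map fun t =>
    if t < d - i then r + (d - i) - t else t - (d - i)

/-- The reading word `π(T) = T_d T_{d-1} ⋯ T_1` of the distinguished tableau of
shape `Z(d,r)`. -/
def piWord (d r : ℕ) : List ℕ :=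
  (List.range d).flatMap fun k => rowWord d r (d - k)

/-- `μ_i = Z(d,r)_i - λ_i`. -/
def muF (d r : ℕ) (lam : ℕ → ℕ) (i : ℕ) : ℕ := r + 2 * d + 1 - 2 * i - lam i

/-- `σ_i = μ_1 + ⋯ + μ_i`. -/
def sigmaF (d r : ℕ) (lam : ℕ → ℕ) (i : ℕ) : ℕ := ∑ t ∈ Finset.Icc 1 i, muF d r lam t

/-- `ν_i = min{μ_i, …, μ_d}`. -/
noncomputable def nuF (d r : ℕ) (lam : ℕ → ℕ) (i : ℕ) : ℕ :=
  sInf {m : ℕ | ∃ j : ℕ, i ≤ j ∧ j ≤ d ∧ m = muF d r lam j}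

/-- The word `a^λ`: the concatenation over `i = 1, …, d` of the increasing runs
`(d+r-i-μ_i+1, …, d+r-i)`. -/
def aLamWord (d r : ℕ) (lam : ℕ → ℕ) : List ℕ :=
  (List.range d).flatMap fun k =>
    (List.range (muF d r lam (k + 1))).map fun t =>
      d + r - (k + 1) - muF d r lam (k + 1) + 1 + t

/-- Row `i` of the tableau `P(w^λ)`: entries `P(i,c) = c` for `c ≥ 0` and
`P(i,c) = r - c - ν_{d+1+c}` for `c < 0`. -/
noncomputable def rowWordP (d r : ℕ) (lam : ℕ → ℕ) (i : ℕ) : List ℕ :=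
  (List.range (lam i)).map fun t =>
    if t < d - i then r + (d - i) - t - nuF d r lam (i + 1 + t) else t - (d - i)

/-- The reading word `π(P(w^λ))`. -/
noncomputable def piWordP (d r : ℕ) (lam : ℕ → ℕ) : List ℕ :=
  (List.range d).flatMap fun k => rowWordP d r lam (d - k)

/-- The shape obtained from `λ` by adding one box at the end of row `i`. -/
def stepShape (lam : ℕ → ℕ) (i : ℕ) : ℕ → ℕ :=
  fun t => if t = i then lam i + 1 else lam t

/-- The box-adding map `f_i` on fillings: swap columns `j = λ_i + i - d` and `j + 1`
(in rows `1, …, i-1`), and put the value `N + 1` in the new box `(i, j)`. -/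
def addBox (d : ℕ) (lam : ℕ → ℕ) (i : ℕ) (N : ℕ) (B : ℤ × ℤ → ℕ) : ℤ × ℤ → ℕ :=
  fun p =>
    if p = ((i : ℤ), (lam i : ℤ) + (i : ℤ) - (d : ℤ)) then N + 1
    else if 1 ≤ p.1 ∧ p.1 < (i : ℤ) ∧ p.2 = (lam i : ℤ) + (i : ℤ) - (d : ℤ) then
      B (p.1, p.2 + 1)
    else if 1 ≤ p.1 ∧ p.1 < (i : ℤ) ∧ p.2 = (lam i : ℤ) + (i : ℤ) - (d : ℤ) + 1 then
      B (p.1, p.2 - 1)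
    else B p

/-- Successively apply the box-adding maps along a list of row indices,
tracking the current shape. -/
def FmapAux (d : ℕ) : List ℕ → (ℕ → ℕ) → (ℤ × ℤ → ℕ) → (ℤ × ℤ → ℕ)
  | [], _, B => B
  | i :: rest, lam, B => FmapAux d rest (stepShape lam i) (addBox d lam i (sizeP d lam) B)

/-- The shape after successively adding boxes along a list of row indices. -/
def shapeAux : List ℕ → (ℕ → ℕ) → (ℕ → ℕ)
  | [], lam => lam
  | i :: rest, lam => shapeAux rest (stepShape lam i)

/-- The list of row indices `1^{μ_1} 2^{μ_2} ⋯ d^{μ_d}` used to pad `λ` to `Z(d,r)`. -/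
def rowsList (d r : ℕ) (lam : ℕ → ℕ) : List ℕ :=
  (List.range d).flatMap fun k => List.replicate (muF d r lam (k + 1)) (k + 1)

/-- `BS(Z(d,r))|_λ`: balanced tableaux of shape `Z(d,r)` such that for each
`i ∈ {1,…,d}` the entries `N + σ_{i-1} + 1, …, N + σ_i` all occur in row `i`. -/
def BSRestricted (d r : ℕ) (lam : ℕ → ℕ) : Set (ℤ × ℤ → ℕ) :=
  {T | IsBalanced d (Zlam d r) T ∧ ∀ i : ℕ, 1 ≤ i → i ≤ d →
    ∀ k : ℕ, sizeP d lam + sigmaF d r lam (i - 1) + 1 ≤ k →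
      k ≤ sizeP d lam + sigmaF d r lam i →
      ∃ c : ℤ, ((i : ℤ), c) ∈ Diagram d (Zlam d r) ∧ T ((i : ℤ), c) = k}

/-- `w ∈ W(B_n)` pattern embeds the signed pattern `v` (given as its one-line
notation, a list of nonzero integers). -/
def PatternEmbeds (n : ℕ) (w : Equiv.Perm ℤ) (v : List ℤ) : Prop :=
  ∃ idx : Fin v.length → ℤ, StrictMono idx ∧
    (∀ j, 1 ≤ idx j ∧ idx j ≤ (n : ℤ)) ∧
    (∀ j, 0 < w (idx j) ↔ 0 < v.get j) ∧
    (∀ j k, |w (idx j)| < |w (idx k)| ↔ |v.get j| < |v.get k|)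


/-!
Read the boxes `(i, c)` with `c ≥ 0` as positive roots of type `A`: row `i` becomes
`y = d + r + 1 - i`, and `(i, c)` becomes the pair `c < y`. Its hook then consists of the pairs
`c < z` and `z < y` with `c < z < y`, and the balance condition says that exactly `y - c - 1` of
these carry a larger label, on average one for each `z`. By induction on the interval from `c` to
`y`, this forces exactly one for each `z`, so the label of `c < y` lies between those of `c < z` and
`z < y`, a missing box counting as `0`. For `z = c + 1 ≤ r` the pair `c < z` is
missing, so the label of `c < y` is at most that of `c + 1 < y`.
-/

section BalancedLabeling

open Finset

lemma forall_or_iff_forall_not_and_of_card_filter_add_card_filter {ι : Type*} {s : Finset ι}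
    {p q : ι → Prop} [DecidablePred p] [DecidablePred q]
    (h : #{z ∈ s | p z} + #{z ∈ s | q z} = #s) :
    (∀ z ∈ s, p z ∨ q z) ↔ ∀ z ∈ s, ¬(p z ∧ q z) := by
  classical
  rw [← card_union_add_card_inter, ← filter_or, ← filter_and] at h
  rw [← card_filter_eq_iff, ← filter_eq_empty_iff, ← card_eq_zero]
  omega

variable {α β : Type*} [LinearOrder α] [LocallyFiniteOrder α] [LinearOrder β] [OrderBot β]

/-- Edelman–Greene balance for a labeling of the positive roots `e_y - e_x` (`x < y`) of type `A`:
as many labels in the hook of a root exceed its own label as there are indices between `x` and `y`.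
The value `⊥` marks the roots that carry no label; those that carry one are required to be closed
under addition. -/
structure IsBalancedLabeling (L : α → α → β) : Prop where
  ne_bot_trans : ∀ ⦃x z y⦄, x < z → z < y → L x z ≠ ⊥ → L z y ≠ ⊥ → L x y ≠ ⊥
  card_add_card : ∀ ⦃x y⦄, x < y → L x y ≠ ⊥ →
    #{z ∈ Ioo x y | L x y < L x z} + #{z ∈ Ioo x y | L x y < L z y} = #(Ioo x y)

namespace IsBalancedLabeling

variable {L : α → α → β} {x y z : α}

lemma exists_le_and_le_of_lt_of_lt (hL : IsBalancedLabeling L) (hbot : L x y ≠ ⊥)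
    (hxz : x < z) (hzy : z < y) (hleft : L x y < L x z) (hright : L x y < L z y) :
    ∃ w, x < w ∧ w < y ∧ L x w ≤ L x y ∧ L w y ≤ L x y := by
  by_contra! h
  have covered : ∀ w ∈ Ioo x y, L x y < L x w ∨ L x y < L w y := fun w hw ↦
    (lt_or_ge _ _).imp_right (h w (mem_Ioo.1 hw).1 (mem_Ioo.1 hw).2)
  have card_add_card := hL.card_add_card (hxz.trans hzy) hbot
  exact (forall_or_iff_forall_not_and_of_card_filter_add_card_filter card_add_card).1 covered z
    (mem_Ioo.2 ⟨hxz, hzy⟩) ⟨hleft, hright⟩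

-- If `z` is counted twice, some `w` is not counted at all. Betweenness on the one of `[x, z]`,
-- `[z, y]` that contains `w` makes the label between `w` and `z` exceed `L x y`, so on the other
-- side the label between `w` and an end point is bounded below by two labels exceeding `L x y`.
lemma not_lt_and_lt_of_forall_ssubset (hL : IsBalancedLabeling L) (hbot : L x y ≠ ⊥)
    (between : ∀ ⦃a c b⦄, a < c → c < b → Icc a b ⊂ Icc x y → L a b ∈ Set.uIcc (L a c) (L c b))
    (hxz : x < z) (hzy : z < y) : ¬(L x y < L x z ∧ L x y < L z y) := by
  rintro ⟨hleft, hright⟩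
  obtain ⟨w, hxw, hwy, hxw_le, hwy_le⟩ :=
    hL.exists_le_and_le_of_lt_of_lt hbot hxz hzy hleft hright
  have hxy := hxz.trans hzy
  rcases lt_trichotomy w z with hwz | rfl | hzw
  · have xz_between := between hxw hwz (Icc_ssubset_Icc_right hxy.le le_rfl hzy)
    have wy_between := between hwz hzy (Icc_ssubset_Icc_left hxy.le hxw le_rfl)
    have hmid : L x y < L w z :=
      (lt_sup_iff.1 (hleft.trans_le xz_between.2)).resolve_left hxw_le.not_gt
    exact hwy_le.not_gt ((lt_inf_iff.2 ⟨hmid, hright⟩).trans_le wy_between.1)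
  · exact hxw_le.not_gt hleft
  · have zy_between := between hzw hwy (Icc_ssubset_Icc_left hxy.le hxz le_rfl)
    have xw_between := between hxz hzw (Icc_ssubset_Icc_right hxy.le le_rfl hwy)
    have hmid : L x y < L z w :=
      (lt_sup_iff.1 (hright.trans_le zy_between.2)).resolve_right hwy_le.not_gt
    exact hxw_le.not_gt ((lt_inf_iff.2 ⟨hleft, hmid⟩).trans_le xw_between.1)

theorem mem_uIcc (hL : IsBalancedLabeling L) (hxz : x < z) (hzy : z < y) :
    L x y ∈ Set.uIcc (L x z) (L z y) := by
  induction hI : Icc x y using Finset.strongInduction generalizing x z y with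
  | H I ih =>
  subst hI
  by_cases hbot : L x y = ⊥
  · have : L x z = ⊥ ∨ L z y = ⊥ := by
      by_contra! h
      exact hL.ne_bot_trans hxz hzy h.1 h.2 hbot
    rcases this with h | h <;> simp [Set.uIcc, hbot, h]
  have not_both : ∀ m ∈ Ioo x y, ¬(L x y < L x m ∧ L x y < L m y) := fun m hm ↦
    hL.not_lt_and_lt_of_forall_ssubset hbot (fun a c b hac hcb hab ↦ ih _ hab hac hcb rfl)
      (mem_Ioo.1 hm).1 (mem_Ioo.1 hm).2
  have hz : z ∈ Ioo x y := mem_Ioo.2 ⟨hxz, hzy⟩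
  have left_or_right : L x y < L x z ∨ L x y < L z y :=
    (forall_or_iff_forall_not_and_of_card_filter_add_card_filter
      (hL.card_add_card (hxz.trans hzy) hbot)).2 not_both z hz
  exact ⟨le_of_not_gt fun h ↦ not_both z hz (lt_inf_iff.1 h), (lt_sup_iff.2 left_or_right).le⟩

theorem le_of_eq_bot (hL : IsBalancedLabeling L) (hxz : x < z) (hzy : z < y) (h : L x z = ⊥) :
    L x y ≤ L z y := by
  simpa [Set.uIcc, h] using (hL.mem_uIcc hxz hzy).2

end IsBalancedLabeling

end BalancedLabeling

section Hooks

variable {d : ℕ} {lam : ℕ → ℕ} {B : ℤ × ℤ → ℕ} {i c : ℤ}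

lemma IsFilling.ne_zero_iff (hB : IsFilling d lam B) {p : ℤ × ℤ} :
    B p ≠ 0 ↔ p ∈ Diagram d lam :=
  ⟨not_imp_comm.1 (hB.2 p), fun hp ↦ (Nat.one_le_iff_ne_zero.1 (hB.1.mapsTo hp).1)⟩

lemma IsFilling.finite_diagram (hB : IsFilling d lam B) : (Diagram d lam).Finite :=
  hB.1.finite_iff_finite.2 (Set.finite_Icc _ _)

lemma extFilling_of_mem_diagram {p : ℤ × ℤ} (hp : p ∈ Diagram d lam) :
    ExtFilling d B p = B p := by
  simp only [Diagram, Set.mem_ofPred_eq] at hp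
  exact if_neg (by omega)

lemma extHook_of_nonneg (hc : 0 ≤ c) :
    ExtHook d lam i c =
      insert (i, c) {p ∈ Diagram d lam | (p.1 = i ∧ c < p.2) ∨ (p.2 = c ∧ i < p.1)} := by
  simp [ExtHook, Hook, hc.not_gt]

lemma IsFilling.setOf_lt_extFilling_eq_union (hB : IsFilling d lam B) (hp : (i, c) ∈ Diagram d lam)
    (hc : 0 ≤ c) :
    {q ∈ ExtHook d lam i c | B (i, c) < ExtFilling d B q} =
      (fun b ↦ (i, b)) '' {b | c < b ∧ B (i, c) < B (i, b)} ∪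
        (fun a ↦ (a, c)) '' {a | i < a ∧ B (i, c) < B (a, c)} := by
  ext ⟨a, b⟩
  have mem_of_lt (h : B (i, c) < B (a, b)) : (a, b) ∈ Diagram d lam :=
    hB.ne_zero_iff.1 (Nat.ne_zero_of_lt h)
  rw [extHook_of_nonneg hc]
  constructor
  · rintro ⟨hq | ⟨hq, ⟨rfl, hcb⟩ | ⟨rfl, hia⟩⟩, hlt⟩
    · rw [hq, extFilling_of_mem_diagram hp] at hlt
      exact (lt_irrefl _ hlt).elim
    · rw [extFilling_of_mem_diagram hq] at hlt
      exact Or.inl ⟨b, ⟨hcb, hlt⟩, rfl⟩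
    · rw [extFilling_of_mem_diagram hq] at hlt
      exact Or.inr ⟨a, ⟨hia, hlt⟩, rfl⟩
  · rintro (⟨b, ⟨hcb, hlt⟩, ⟨⟩⟩ | ⟨a, ⟨hia, hlt⟩, ⟨⟩⟩)
    · refine ⟨Or.inr ⟨mem_of_lt hlt, Or.inl ⟨rfl, hcb⟩⟩, ?_⟩
      rwa [extFilling_of_mem_diagram (mem_of_lt hlt)]
    · refine ⟨Or.inr ⟨mem_of_lt hlt, Or.inr ⟨rfl, hia⟩⟩, ?_⟩
      rwa [extFilling_of_mem_diagram (mem_of_lt hlt)]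

lemma IsBalanced.ncard_arm_add_ncard_leg (hB : IsBalanced d lam B) (hp : (i, c) ∈ Diagram d lam)
    (hc : 0 ≤ c) :
    ({b | c < b ∧ B (i, c) < B (i, b)}.ncard + {a | i < a ∧ B (i, c) < B (a, c)}.ncard : ℤ) =
      lam i.toNat - d + i - c - 1 := by
  have hcard := hB.2 _ hp
  have hfin := hB.1.finite_diagram.subset fun q (hq : B (i, c) < B q) ↦
    hB.1.ne_zero_iff.1 (Nat.ne_zero_of_lt hq)
  rw [rk, if_pos hc, hB.1.setOf_lt_extFilling_eq_union hp hc,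
    Set.ncard_union_eq ?disjoint (hfin.subset ?arm) (hfin.subset ?leg),
    Set.ncard_image_of_injective _ (Prod.mk_right_injective i),
    Set.ncard_image_of_injective _ (Prod.mk_left_injective c)] at hcard
  case disjoint =>
    rw [Set.disjoint_left]
    rintro _ ⟨b, ⟨hcb, -⟩, rfl⟩ ⟨a, -, h⟩
    exact hcb.ne (Prod.ext_iff.1 h).2
  case arm => exact Set.image_subset_iff.2 fun _ h ↦ h.2
  case leg => exact Set.image_subset_iff.2 fun _ h ↦ h.2
  exact_mod_cast hcard

end Hooks

section Trapezoid

open Finset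

variable {d r : ℕ} {B : ℤ × ℤ → ℕ}

/-- The labeling of the type `A` roots `e_y - e_x` read off a filling `B` of `Z(d,r)`: the root
`e_y - e_x` is the box in column `x` of the row whose last column is `y - 1`. -/
def trapezoidLabel (d r : ℕ) (B : ℤ × ℤ → ℕ) (x y : ℕ) : ℕ := B ((d : ℤ) + r + 1 - y, x)

lemma trapezoidLabel_ne_zero_iff (hB : IsFilling d (Zlam d r) B) {x y : ℕ} :
    trapezoidLabel d r B x y ≠ 0 ↔ r < y ∧ y ≤ d + r ∧ x < y := by
  rw [trapezoidLabel, hB.ne_zero_iff]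
  simp only [Diagram, Zlam, Set.mem_ofPred_eq]
  omega

lemma ncard_arm_eq_card_filter (hB : IsFilling d (Zlam d r) B) (x y : ℕ) :
    {b : ℤ | x < b ∧ B ((d : ℤ) + r + 1 - y, x) < B ((d : ℤ) + r + 1 - y, b)}.ncard =
      #{z ∈ Ioo x y | trapezoidLabel d r B x y < trapezoidLabel d r B z y} := by
  rw [← Set.ncard_coe_finset, ← Set.ncard_image_of_injective _ (Nat.cast_injective (R := ℤ))]
  congr 1
  ext b
  simp only [Set.mem_ofPred_eq, Set.mem_image, mem_coe, mem_filter, mem_Ioo]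
  constructor
  · rintro ⟨hxb, hlt⟩
    lift b to ℕ using by omega
    obtain ⟨-, -, hby⟩ := (trapezoidLabel_ne_zero_iff hB).1 (Nat.ne_zero_of_lt hlt)
    exact ⟨b, ⟨⟨by omega, hby⟩, hlt⟩, rfl⟩
  · rintro ⟨z, ⟨⟨hxz, -⟩, hlt⟩, rfl⟩
    exact ⟨by omega, hlt⟩

lemma ncard_leg_eq_card_filter (hB : IsFilling d (Zlam d r) B) (x y : ℕ) :
    {a : ℤ | (d : ℤ) + r + 1 - y < a ∧ B ((d : ℤ) + r + 1 - y, x) < B (a, x)}.ncard =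
      #{z ∈ Ioo x y | trapezoidLabel d r B x y < trapezoidLabel d r B x z} := by
  rw [← Set.ncard_coe_finset, ← Set.ncard_image_of_injective _
    ((sub_right_injective (b := (d : ℤ) + r + 1)).comp Nat.cast_injective)]
  congr 1
  ext a
  simp only [Set.mem_ofPred_eq, Set.mem_image, mem_coe, mem_filter, mem_Ioo, Function.comp_apply]
  constructor
  · rintro ⟨hya, hlt⟩
    have ha := hB.ne_zero_iff.1 (Nat.ne_zero_of_lt hlt)
    simp only [Diagram, Set.mem_ofPred_eq] at ha
    obtain ⟨z, rfl⟩ : ∃ z : ℕ, a = d + r + 1 - z := ⟨(d + r + 1 - a).toNat, by omega⟩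
    obtain ⟨-, -, hxz⟩ := (trapezoidLabel_ne_zero_iff hB).1 (Nat.ne_zero_of_lt hlt)
    exact ⟨z, ⟨⟨hxz, by omega⟩, hlt⟩, rfl⟩
  · rintro ⟨z, ⟨⟨-, hzy⟩, hlt⟩, rfl⟩
    exact ⟨by omega, hlt⟩

theorem IsBalanced.isBalancedLabeling_trapezoidLabel (hB : IsBalanced d (Zlam d r) B) :
    IsBalancedLabeling (trapezoidLabel d r B) where
  ne_bot_trans x z y _ _ hxz hzy := by
    rw [bot_eq_zero, trapezoidLabel_ne_zero_iff hB.1] at *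
    omega
  card_add_card x y _ h := by
    have hbox := (trapezoidLabel_ne_zero_iff hB.1).1 h
    have hcard := hB.ncard_arm_add_ncard_leg (hB.1.ne_zero_iff.1 h) (Int.natCast_nonneg x)
    rw [ncard_arm_eq_card_filter hB.1, ncard_leg_eq_card_filter hB.1, Zlam] at hcard
    rw [Nat.card_Ioo]
    omega

end Trapezoid

/-- in a balanced shifted tableau of trapezoid shape `Z(d,r)`,
each row increases along columns `0, 1, …, r`. -/
theorem balanced_trapezoid_row_increasing (d r : ℕ) (hd : 1 ≤ d)
    (B : ℤ × ℤ → ℕ) (hB : IsBalanced d (Zlam d r) B)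
    (i : ℤ) (hi1 : 1 ≤ i) (hid : i ≤ (d : ℤ)) :
    ∀ c : ℤ, 0 ≤ c → c < (r : ℤ) → B (i, c) < B (i, c + 1) := by
  intro c hc hcr
  obtain ⟨y, rfl⟩ : ∃ y : ℕ, i = d + r + 1 - y := ⟨(d + r + 1 - i).toNat, by omega⟩
  lift c to ℕ using hc
  have label_ne_zero {x : ℕ} (hx : x ≤ r) : trapezoidLabel d r B x y ≠ 0 :=
    (trapezoidLabel_ne_zero_iff hB.1).2 (by omega)
  have label_eq_zero : trapezoidLabel d r B c (c + 1) = 0 :=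
    not_not.1 (mt (trapezoidLabel_ne_zero_iff hB.1).1 (by omega))
  have label_le : trapezoidLabel d r B c y ≤ trapezoidLabel d r B (c + 1) y :=
    hB.isBalancedLabeling_trapezoidLabel.le_of_eq_bot (by omega) (by omega) label_eq_zero
  rw [← Nat.cast_succ]
  refine lt_of_le_of_ne label_le fun heq ↦ ?_
  have box_eq := hB.1.1.injOn (hB.1.ne_zero_iff.1 (label_ne_zero (by omega)))
    (hB.1.ne_zero_iff.1 (label_ne_zero (x := c + 1) (by omega))) heq
  simp at box_eq

end BST
end

section
/- Let d ≥ 1 and r ≥ 0, and let T be the shifted tableau of shape Z(d,r) with T(i,c) = r − c for c < 0 and T(i,c) = c for c ≥ 0. For every i ∈ {1, …, d}, the concatenation T_d T_{d−1} ⋯ T_{d−i+1} of the bottom i rows of T (each row read left to right), viewed as a word in the letters {0, …, d+r−1}, is a reduced word of the signed permutation u^{(i)} ∈ W(B_{d+r}) with one-line notation (i+1, i+2, …, r+i, −1, −2, …, −i, r+i+1, …, r+d). -/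
open scoped BigOperators

namespace BST

/-!
Writing `e_0 = 0` and `e_{-k} = -e_k`, the positive roots are exactly the vectors `e_y - e_x` with
`|x| < y ≤ n`, and `w · (e_y - e_x) = e_{w y} - e_{w x}`. Since `s_a` permutes the positive roots
other than `α_a`, each letter of a word creates at most one inversion, so a word of `w` with no more
letters than `w` has inversions is reduced. Multiplying out the rows one at a time identifies the
product of the bottom `i` rows with `u^{(i)}`. These rows have `i (i + r)` letters, and `u^{(i)}`
has at least as many inversions: the roots `e_b + e_a` with `a ≤ i` and `a < b ≤ i + r`, and the
roots `e_a - e_c` with `0 ≤ c < a ≤ i`.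
-/

/-! ### Signed permutations and words -/

theorem sB_zero_apply (x : ℤ) : sB 0 x = if x = 1 then -1 else if x = -1 then 1 else x := by
  simp [sB, Equiv.swap_apply_def]

theorem sB_apply_of_ne_zero {a : ℕ} (ha : a ≠ 0) (x : ℤ) :
    sB a x = if x = a then (a : ℤ) + 1 else if x = a + 1 then (a : ℤ) else
      if x = -a then -(a : ℤ) - 1 else if x = -(a : ℤ) - 1 then -(a : ℤ) else x := by
  simp only [sB, ha, if_false, Equiv.Perm.mul_apply, Equiv.swap_apply_def]
  split_ifs <;> omega

theorem isSignedPerm_sB {a n : ℕ} (ha : a < n) : IsSignedPerm n (sB a) := by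
  rcases eq_or_ne a 0 with rfl | ha0
  · simp only [IsSignedPerm, sB_zero_apply, lt_abs]
    refine ⟨fun x => ?_, fun x hx => ?_⟩ <;> split_ifs <;> omega
  · simp only [IsSignedPerm, sB_apply_of_ne_zero ha0, lt_abs]
    refine ⟨fun x => ?_, fun x hx => ?_⟩ <;> split_ifs <;> omega

theorem sB_mul_self (a : ℕ) : sB a * sB a = 1 := by
  rcases eq_or_ne a 0 with rfl | ha
  · rw [sB, if_pos rfl, Equiv.swap_mul_self]
  · ext x
    simp only [Equiv.Perm.mul_apply, sB_apply_of_ne_zero ha, Equiv.Perm.one_apply]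
    split_ifs <;> omega

theorem sB_inv (a : ℕ) : (sB a)⁻¹ = sB a :=
  inv_eq_of_mul_eq_one_left (sB_mul_self a)

theorem sB_lt_sB {a : ℕ} {x y : ℤ} (hxy : |x| < y) (hne : ¬(x = a ∧ y = a + 1)) :
    sB a x < sB a y := by
  rw [abs_lt] at hxy
  rcases eq_or_ne a 0 with rfl | ha
  · simp only [sB_zero_apply]
    split_ifs <;> omega
  · simp only [sB_apply_of_ne_zero ha]
    split_ifs <;> omega

namespace IsSignedPerm

variable {n : ℕ} {v w : Equiv.Perm ℤ}

theorem one : IsSignedPerm n 1 :=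
  ⟨fun _ => rfl, fun _ _ => rfl⟩

theorem mul (hv : IsSignedPerm n v) (hw : IsSignedPerm n w) : IsSignedPerm n (v * w) := by
  constructor <;> intro x
  · simp only [Equiv.Perm.mul_apply, hw.1, hv.1]
  · intro hx
    rw [Equiv.Perm.mul_apply, hw.2 x hx, hv.2 x hx]

theorem inv (hw : IsSignedPerm n w) : IsSignedPerm n w⁻¹ := by
  constructor <;> intro x
  · rw [Equiv.Perm.inv_eq_iff_eq, hw.1, Equiv.Perm.coe_inv, Equiv.apply_symm_apply]
  · intro hx
    rw [Equiv.Perm.inv_eq_iff_eq, hw.2 x hx]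

theorem apply_zero (hw : IsSignedPerm n w) : w 0 = 0 := by
  have h := hw.1 0
  rw [neg_zero] at h
  omega

theorem abs_apply_le (hw : IsSignedPerm n w) {x : ℤ} (hx : |x| ≤ n) : |w x| ≤ n := by
  by_contra! h
  rw [w.injective (hw.2 _ h)] at h
  exact absurd hx h.not_ge

theorem abs_apply_ne (hw : IsSignedPerm n w) {x y : ℤ} (hxy : |x| ≠ |y|) : |w x| ≠ |w y| := by
  rw [Ne, abs_eq_abs, ← hw.1, w.injective.eq_iff, w.injective.eq_iff, ← abs_eq_abs]
  exact hxy

theorem ext_pos (hv : IsSignedPerm n v) (hw : IsSignedPerm n w) (h : ∀ t, 1 ≤ t → v t = w t) :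
    v = w := by
  ext t
  rcases lt_trichotomy t 0 with ht | rfl | ht
  · rw [← neg_neg t, hv.1, hw.1, h (-t) (by omega)]
  · rw [hv.apply_zero, hw.apply_zero]
  · exact h t ht

end IsSignedPerm

theorem wordProd_nil : wordProd [] = 1 := rfl

theorem wordProd_cons (a : ℕ) (L : List ℕ) : wordProd (a :: L) = sB a * wordProd L := by
  simp only [wordProd, List.map_cons, List.prod_cons]

theorem wordProd_singleton (a : ℕ) : wordProd [a] = sB a := by
  rw [wordProd_cons, wordProd_nil, mul_one]

theorem wordProd_append (L M : List ℕ) : wordProd (L ++ M) = wordProd L * wordProd M := by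
  simp only [wordProd, List.map_append, List.prod_append]

theorem isSignedPerm_wordProd {n : ℕ} {L : List ℕ} (hL : ∀ a ∈ L, a < n) :
    IsSignedPerm n (wordProd L) := by
  induction L with
  | nil => exact .one
  | cons a L ih =>
    rw [List.forall_mem_cons] at hL
    rw [wordProd_cons]
    exact (isSignedPerm_sB hL.1).mul (ih hL.2)

/-! ### Roots and inversions -/

theorem eVec_zero : eVec 0 = 0 := by
  funext t
  simp only [eVec, Pi.zero_apply]
  split_ifs <;> omega

theorem eVec_neg (k : ℤ) : eVec (-k) = -eVec k := by
  funext t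
  simp only [eVec, Pi.neg_apply]
  split_ifs <;> omega

theorem eVec_injective : Function.Injective eVec := by
  intro k l h
  have hk := congrFun h k
  have hl := congrFun h l
  simp only [eVec] at hk hl
  split_ifs at hk hl <;> omega

theorem actB_mul (v w : Equiv.Perm ℤ) (α : ℤ → ℤ) : actB (v * w) α = actB v (actB w α) := by
  funext t
  simp only [actB, mul_inv_rev, Equiv.Perm.mul_apply]

theorem actB_one (α : ℤ → ℤ) : actB 1 α = α := rfl

theorem actB_sub (w : Equiv.Perm ℤ) (α β : ℤ → ℤ) : actB w (α - β) = actB w α - actB w β := rfl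

theorem actB_eVec {n : ℕ} {w : Equiv.Perm ℤ} (hw : IsSignedPerm n w) (k : ℤ) :
    actB w (eVec k) = eVec (w k) := by
  funext t
  have h0 : w⁻¹ t = 0 ↔ t = 0 := by rw [Equiv.Perm.inv_eq_iff_eq, hw.apply_zero]
  have hk (l : ℤ) : w⁻¹ t = l ↔ t = w l := Equiv.Perm.inv_eq_iff_eq
  simp only [actB, eVec, h0, hk, hw.1]

theorem alphaRoot_eq (a : ℕ) : alphaRoot a = eVec (a + 1) - eVec a := by
  rcases eq_or_ne a 0 with rfl | ha
  · simp [alphaRoot, eVec_zero]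
  · rw [alphaRoot, if_neg ha]

theorem mem_posRoots_iff {n : ℕ} {α : ℤ → ℤ} :
    α ∈ PosRoots n ↔ ∃ x y : ℤ, |x| < y ∧ y ≤ n ∧ α = eVec y - eVec x := by
  constructor
  · rintro (⟨i, j, hi, hij, hj, rfl | rfl⟩ | ⟨i, hi, hin, rfl⟩)
    · exact ⟨i, j, by rw [abs_lt]; omega, hj, rfl⟩
    · exact ⟨-i, j, by rw [abs_lt]; omega, hj, by rw [eVec_neg, sub_neg_eq_add]⟩
    · exact ⟨0, i, by rw [abs_zero]; omega, hin, by rw [eVec_zero, sub_zero]⟩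
  · rintro ⟨x, y, hxy, hy, rfl⟩
    rw [abs_lt] at hxy
    rcases lt_trichotomy x 0 with hx | rfl | hx
    · refine .inl ⟨-x, y, by omega, by omega, hy, .inr ?_⟩
      rw [eVec_neg, sub_eq_add_neg]
    · exact .inr ⟨y, by omega, hy, by rw [eVec_zero, sub_zero]⟩
    · exact .inl ⟨x, y, by omega, by omega, hy, .inl rfl⟩

theorem eVec_sub_eVec_mem_posRoots {n : ℕ} {x y : ℤ} (hx : |x| ≤ n) (hy : |y| ≤ n)
    (hne : |x| ≠ |y|) (hxy : x < y) : eVec y - eVec x ∈ PosRoots n := by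
  rw [mem_posRoots_iff]
  rw [abs_le] at hx hy
  rw [Ne, abs_eq_abs] at hne
  rcases lt_or_ge (-y) x with h | h
  · exact ⟨x, y, abs_lt.2 ⟨h, hxy⟩, hy.2, rfl⟩
  · refine ⟨-y, -x, by rw [abs_lt]; omega, by omega, ?_⟩
    rw [eVec_neg, eVec_neg, neg_sub_neg]

theorem eVec_sub_eVec_apply_self {x y : ℤ} (hxy : |x| < y) : (eVec y - eVec x) y = 1 := by
  rw [abs_lt] at hxy
  simp only [Pi.sub_apply, eVec]
  split_ifs <;> omega

theorem eVec_sub_eVec_apply_of_lt {x y t : ℤ} (hxy : |x| < y) (ht : y < t) :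
    (eVec y - eVec x) t = 0 := by
  rw [abs_lt] at hxy
  simp only [Pi.sub_apply, eVec]
  split_ifs <;> omega

theorem injOn_eVec_sub_eVec :
    Set.InjOn (fun p : ℤ × ℤ => eVec p.2 - eVec p.1) {p | |p.1| < p.2} := by
  rintro ⟨x, y⟩ (hxy : |x| < y) ⟨x', y'⟩ (hxy' : |x'| < y') h
  replace h : eVec y - eVec x = eVec y' - eVec x' := h
  have hy : y = y' := by
    rcases lt_trichotomy y y' with hlt | heq | hgt
    · have h1 := eVec_sub_eVec_apply_self hxy'
      rw [← h, eVec_sub_eVec_apply_of_lt hxy hlt] at h1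
      omega
    · exact heq
    · have h1 := eVec_sub_eVec_apply_self hxy
      rw [h, eVec_sub_eVec_apply_of_lt hxy' hgt] at h1
      omega
  subst hy
  rw [eVec_injective (sub_right_injective h)]

theorem neg_notMem_posRoots {n : ℕ} {α : ℤ → ℤ} (hα : α ∈ PosRoots n) : -α ∉ PosRoots n := by
  intro hneg
  obtain ⟨x, y, hxy, -, rfl⟩ := mem_posRoots_iff.1 hα
  obtain ⟨x', y', hxy', -, h⟩ := mem_posRoots_iff.1 hneg
  have h1 := eVec_sub_eVec_apply_self hxy
  have h2 := eVec_sub_eVec_apply_self hxy'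
  rw [← h, Pi.neg_apply] at h2
  rcases lt_trichotomy y y' with hlt | rfl | hgt
  · rw [eVec_sub_eVec_apply_of_lt hxy hlt] at h2
    omega
  · omega
  · have h3 := eVec_sub_eVec_apply_of_lt hxy' hgt
    rw [← h, Pi.neg_apply] at h3
    omega

theorem finite_posRoots (n : ℕ) : (PosRoots n).Finite := by
  refine ((Set.finite_Icc (-n : ℤ) n).prod (Set.finite_Icc (-n : ℤ) n)).image
    (fun p => eVec p.2 - eVec p.1) |>.subset fun α hα => ?_
  obtain ⟨x, y, hxy, hy, rfl⟩ := mem_posRoots_iff.1 hα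
  rw [abs_lt] at hxy
  exact ⟨(x, y), ⟨⟨by omega, by omega⟩, by omega, hy⟩, rfl⟩

theorem finite_invSet (n : ℕ) (w : Equiv.Perm ℤ) : (InvSet n w).Finite :=
  (finite_posRoots n).subset fun _ hα => hα.1

theorem actB_sB_mem_posRoots {n a : ℕ} (ha : a < n) {α : ℤ → ℤ} (hα : α ∈ PosRoots n)
    (hne : α ≠ alphaRoot a) : actB (sB a) α ∈ PosRoots n := by
  obtain ⟨x, y, hxy, hy, rfl⟩ := mem_posRoots_iff.1 hα
  have hs := isSignedPerm_sB ha
  have hy0 : |y| = y := abs_of_pos ((abs_nonneg x).trans_lt hxy)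
  rw [actB_sub, actB_eVec hs, actB_eVec hs]
  refine eVec_sub_eVec_mem_posRoots (hs.abs_apply_le (by omega)) (hs.abs_apply_le (by omega))
    (hs.abs_apply_ne (by omega)) (sB_lt_sB hxy ?_)
  rintro ⟨rfl, rfl⟩
  exact hne (alphaRoot_eq a).symm

theorem invSet_one (n : ℕ) : InvSet n 1 = ∅ :=
  Set.eq_empty_of_forall_notMem fun _ hα => neg_notMem_posRoots hα.1 hα.2

theorem invSet_sB_mul_subset {n a : ℕ} (ha : a < n) (w : Equiv.Perm ℤ) :
    InvSet n (sB a * w) ⊆ insert (alphaRoot a) (actB (sB a) '' InvSet n w) := by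
  rintro α ⟨hα, hneg⟩
  rw [mul_inv_rev, sB_inv, actB_mul] at hneg
  by_cases hne : α = alphaRoot a
  · exact .inl hne
  · refine .inr ⟨actB (sB a) α, ⟨actB_sB_mem_posRoots ha hα hne, hneg⟩, ?_⟩
    rw [← actB_mul, sB_mul_self, actB_one]

theorem ncard_invSet_wordProd_le {n : ℕ} {L : List ℕ} (hL : ∀ a ∈ L, a < n) :
    (InvSet n (wordProd L)).ncard ≤ L.length := by
  induction L with
  | nil => rw [wordProd_nil, invSet_one, Set.ncard_empty, List.length_nil]
  | cons a L ih =>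
    rw [List.forall_mem_cons] at hL
    have hfin := (finite_invSet n (wordProd L)).image (actB (sB a))
    calc (InvSet n (wordProd (a :: L))).ncard
        ≤ (insert (alphaRoot a) (actB (sB a) '' InvSet n (wordProd L))).ncard := by
          rw [wordProd_cons]
          exact Set.ncard_le_ncard (invSet_sB_mul_subset hL.1 _) (hfin.insert _)
      _ ≤ (actB (sB a) '' InvSet n (wordProd L)).ncard + 1 := Set.ncard_insert_le _ _
      _ ≤ (InvSet n (wordProd L)).ncard + 1 := by
          exact Nat.succ_le_succ (Set.ncard_image_le (finite_invSet n _))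
      _ ≤ (a :: L).length := Nat.succ_le_succ (ih hL.2)

theorem isReducedWord_of_length_le_ncard_invSet {n : ℕ} {L : List ℕ} (hL : ∀ a ∈ L, a < n)
    (h : L.length ≤ (InvSet n (wordProd L)).ncard) : IsReducedWord n (wordProd L) L := by
  refine ⟨hL, rfl, le_antisymm (le_csInf ⟨_, L, hL, rfl, rfl⟩ ?_) (Nat.sInf_le ⟨L, hL, rfl, rfl⟩)⟩
  rintro m ⟨M, hM, hML, rfl⟩
  exact h.trans (hML ▸ ncard_invSet_wordProd_le hM)

theorem eVec_sub_eVec_mem_invSet {n : ℕ} {w : Equiv.Perm ℤ} (hw : IsSignedPerm n w) {x y : ℤ}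
    (hxy : |x| < y) (hy : y ≤ n) (h : w⁻¹ y < w⁻¹ x) : eVec y - eVec x ∈ InvSet n w := by
  have hy0 : |y| = y := abs_of_pos ((abs_nonneg x).trans_lt hxy)
  refine ⟨mem_posRoots_iff.2 ⟨x, y, hxy, hy, rfl⟩, ?_⟩
  rw [actB_sub, actB_eVec hw.inv, actB_eVec hw.inv, neg_sub]
  exact eVec_sub_eVec_mem_posRoots (hw.inv.abs_apply_le (by omega))
    (hw.inv.abs_apply_le (by omega)) (hw.inv.abs_apply_ne (by omega)) h

theorem card_le_ncard_invSet {n : ℕ} {w : Equiv.Perm ℤ} (hw : IsSignedPerm n w)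
    (S : Finset (ℤ × ℤ)) (hS : ∀ p ∈ S, |p.1| < p.2 ∧ p.2 ≤ n ∧ w⁻¹ p.2 < w⁻¹ p.1) :
    S.card ≤ (InvSet n w).ncard := by
  rw [← Set.ncard_coe_finset]
  refine Set.ncard_le_ncard_of_injOn (fun p : ℤ × ℤ => eVec p.2 - eVec p.1) ?_ ?_
    (finite_invSet n w)
  · intro p hp
    obtain ⟨hlt, hle, hinv⟩ := hS p hp
    exact eVec_sub_eVec_mem_invSet hw hlt hle hinv
  · exact injOn_eVec_sub_eVec.mono fun p hp => (hS p hp).1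

/-! ### The bottom rows of the distinguished tableau -/

/-- The word `T_d T_{d-1} ⋯ T_{d-i+1}` read off the bottom `i` rows of the distinguished tableau of
shape `Z(d,r)`. -/
def bottomRows (d r i : ℕ) : List ℕ :=
  (List.range i).flatMap fun k => rowWord d r (d - k)

/-- The values `u^{(i)}(t)`, for `t ≥ 1`, of the signed permutation with one-line notation
`(i+1, …, i+r, -1, …, -i, i+r+1, …)`; the values at `t ≤ 0` are irrelevant. -/
def uValue (r i : ℕ) (t : ℤ) : ℤ :=
  if t ≤ r then i + t else if t ≤ r + i then -(t - r) else t

theorem rowWord_eq_append (d r i : ℕ) :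
    rowWord d r i = (List.range' (r + 1) (d - i)).reverse ++ List.range (r + (d - i) + 1) := by
  rw [rowWord, show r + 2 * (d - i) + 1 = (d - i) + (r + (d - i) + 1) by ring, List.range_add,
    List.map_append, List.reverse_range']
  congr 1
  · refine List.map_congr_left fun t ht => ?_
    rw [if_pos (List.mem_range.1 ht)]
    omega
  · simp [Function.comp_def]

theorem bottomRows_succ {d k : ℕ} (r : ℕ) (hk : k ≤ d) :
    bottomRows d r (k + 1) =
      bottomRows d r k ++ ((List.range' (r + 1) k).reverse ++ List.range (r + k + 1)) := by
  rw [bottomRows, List.range_succ, List.flatMap_append, List.flatMap_singleton, rowWord_eq_append,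
    Nat.sub_sub_self hk, bottomRows]

theorem lt_of_mem_bottomRows {d r i : ℕ} (hi : i ≤ d) {a : ℕ} (ha : a ∈ bottomRows d r i) :
    a < d + r := by
  induction i with
  | zero => simp [bottomRows] at ha
  | succ k ih =>
    rw [bottomRows_succ r (by omega)] at ha
    simp only [List.mem_append, List.mem_reverse, List.mem_range'_1, List.mem_range] at ha
    rcases ha with ha | ha | ha
    · exact ih (by omega) ha
    · omega
    · omega

theorem length_bottomRows {d i : ℕ} (r : ℕ) (hi : i ≤ d) :
    (bottomRows d r i).length = i * (i + r) := by
  induction i with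
  | zero => simp [bottomRows]
  | succ k ih =>
    rw [bottomRows_succ r (by omega), List.length_append, ih (by omega), List.length_append,
      List.length_reverse, List.length_range', List.length_range]
    ring

theorem wordProd_range_succ_apply (m : ℕ) {t : ℤ} (ht : 1 ≤ t) :
    wordProd (List.range (m + 1)) t = if t ≤ m then t + 1 else if t = m + 1 then -1 else t := by
  induction m generalizing t with
  | zero =>
    simp only [zero_add, List.range_one, wordProd_singleton, sB_zero_apply, Nat.cast_zero]
    split_ifs <;> omega
  | succ m ih =>
    rw [List.range_succ, wordProd_append, wordProd_singleton, Equiv.Perm.mul_apply,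
      sB_apply_of_ne_zero m.succ_ne_zero, ih (by push_cast; split_ifs <;> omega)]
    push_cast
    split_ifs <;> omega

theorem wordProd_reverse_range'_apply (r k : ℕ) {t : ℤ} (ht : 1 ≤ t) :
    wordProd (List.range' (r + 1) k).reverse t =
      if t = r + 1 then (r : ℤ) + k + 1 else if r + 1 < t ∧ t ≤ r + k + 1 then t - 1 else t := by
  induction k with
  | zero =>
    simp only [List.range'_zero, List.reverse_nil, wordProd_nil, Equiv.Perm.one_apply,
      Nat.cast_zero]
    split_ifs <;> omega
  | succ k ih =>
    rw [List.range'_1_concat, List.reverse_concat, wordProd_cons, Equiv.Perm.mul_apply, ih,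
      sB_apply_of_ne_zero (by omega)]
    push_cast
    split_ifs <;> omega

-- Passing through `r + 1` between the falling and the rising half of a row keeps both steps free of
-- a case distinction between `r = 0` and `r > 0`.
theorem apply_wordProd_reverse_range' {r k : ℕ} {w : Equiv.Perm ℤ}
    (hw : ∀ t, 1 ≤ t → w t = uValue r k t) {t : ℤ} (ht : 1 ≤ t) :
    w (wordProd (List.range' (r + 1) k).reverse t) = uValue (r + 1) k t := by
  rw [wordProd_reverse_range'_apply r k ht, hw _ (by split_ifs <;> omega), uValue, uValue]
  push_cast
  split_ifs <;> omega

theorem apply_wordProd_range {r k : ℕ} {w : Equiv.Perm ℤ} (hodd : ∀ t, w (-t) = -w t)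
    (hw : ∀ t, 1 ≤ t → w t = uValue (r + 1) k t) {t : ℤ} (ht : 1 ≤ t) :
    w (wordProd (List.range (r + k + 1)) t) = uValue r (k + 1) t := by
  rw [wordProd_range_succ_apply _ ht]
  push_cast
  split_ifs with hle heq
  · rw [hw _ (by omega), uValue, uValue]
    push_cast
    split_ifs <;> omega
  · rw [hodd, hw 1 le_rfl, uValue, uValue]
    push_cast
    split_ifs <;> omega
  · rw [hw t ht, uValue, uValue]
    push_cast
    split_ifs <;> omega

theorem wordProd_bottomRows_apply {d i : ℕ} (r : ℕ) (hi : i ≤ d) {t : ℤ} (ht : 1 ≤ t) :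
    wordProd (bottomRows d r i) t = uValue r i t := by
  induction i generalizing t with
  | zero =>
    simp only [bottomRows, List.range_zero, List.flatMap_nil, wordProd_nil, Equiv.Perm.one_apply,
      uValue, Nat.cast_zero]
    split_ifs <;> omega
  | succ k ih =>
    have hsplit := bottomRows_succ r (Nat.le_of_succ_le hi)
    rw [← List.append_assoc] at hsplit
    rw [hsplit, wordProd_append, Equiv.Perm.mul_apply]
    have hsigned : IsSignedPerm (d + r)
        (wordProd (bottomRows d r k ++ (List.range' (r + 1) k).reverse)) :=
      isSignedPerm_wordProd fun a ha =>
        lt_of_mem_bottomRows hi (hsplit ▸ List.mem_append_left _ ha)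
    refine apply_wordProd_range hsigned.1 (fun s hs => ?_) ht
    rw [wordProd_append, Equiv.Perm.mul_apply]
    exact apply_wordProd_reverse_range' (fun _ => ih (Nat.le_of_succ_le hi)) hs

theorem inv_apply_eq_neg_add {n r i : ℕ} {u : Equiv.Perm ℤ} (hu : IsSignedPerm n u)
    (hval : ∀ t, 1 ≤ t → u t = uValue r i t) {y : ℤ} (h1 : 1 ≤ y) (hi : y ≤ i) :
    u⁻¹ y = -(r + y) := by
  rw [Equiv.Perm.inv_eq_iff_eq, hu.1, hval _ (by omega), uValue]
  split_ifs <;> omega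

theorem inv_apply_eq_sub {r i : ℕ} {u : Equiv.Perm ℤ} (hval : ∀ t, 1 ≤ t → u t = uValue r i t)
    {y : ℤ} (hi : i < y) (hir : y ≤ i + r) : u⁻¹ y = y - i := by
  rw [Equiv.Perm.inv_eq_iff_eq, hval _ (by omega), uValue]
  split_ifs <;> omega

theorem mul_add_le_ncard_invSet {n r i : ℕ} (hn : i + r ≤ n) {u : Equiv.Perm ℤ}
    (hu : IsSignedPerm n u) (hval : ∀ t, 1 ≤ t → u t = uValue r i t) :
    i * (i + r) ≤ (InvSet n u).ncard := by
  -- A pair `(a, b)` with `a < b` stands for `e_b + e_a`, one with `b ≤ a` for `e_a - e_{b-1}`.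
  let f : ℤ × ℤ → ℤ × ℤ := fun p => if p.1 < p.2 then (-p.1, p.2) else (p.2 - 1, p.1)
  let R : Finset (ℤ × ℤ) := Finset.Icc 1 (i : ℤ) ×ˢ Finset.Icc 1 ((i : ℤ) + r)
  have hR : (R.image f).card = i * (i + r) := by
    rw [Finset.card_image_of_injOn, Finset.card_product, Int.card_Icc, Int.card_Icc]
    · congr 1 <;> omega
    · rintro ⟨a, b⟩ hab ⟨a', b'⟩ hab' h
      simp only [R, Finset.coe_product, Set.mem_prod, Finset.coe_Icc, Set.mem_Icc] at hab hab'
      simp only [f] at h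
      split_ifs at h <;> simp only [Prod.mk.injEq] at h ⊢ <;> omega
  rw [← hR]
  refine card_le_ncard_invSet hu _ fun p hp => ?_
  obtain ⟨⟨a, b⟩, hab, rfl⟩ := Finset.mem_image.1 hp
  simp only [R, Finset.mem_product, Finset.mem_Icc] at hab
  obtain ⟨⟨ha1, hai⟩, hb1, hbi⟩ := hab
  rcases lt_or_ge a b with hlt | hle
  · have hinv : u⁻¹ b < u⁻¹ (-a) := by
      rw [hu.inv.1, inv_apply_eq_neg_add hu hval ha1 hai]
      rcases le_or_gt b i with hb | hb
      · rw [inv_apply_eq_neg_add hu hval hb1 hb]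
        omega
      · rw [inv_apply_eq_sub hval hb hbi]
        omega
    simp only [f, if_pos hlt, abs_lt]
    exact ⟨by omega, by omega, hinv⟩
  · have hinv : u⁻¹ a < u⁻¹ (b - 1) := by
      rw [inv_apply_eq_neg_add hu hval ha1 hai]
      rcases hb1.eq_or_lt with rfl | hb
      · rw [sub_self, hu.inv.apply_zero]
        omega
      · rw [inv_apply_eq_neg_add hu hval (y := b - 1) (by omega) (by omega)]
        omega
    simp only [f, if_neg hle.not_gt, abs_lt]
    exact ⟨by omega, by omega, hinv⟩

/-- the concatenation of the bottom `i` rows of the distinguished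
tableau of shape `Z(d,r)` is a reduced word of
`u^{(i)} = (i+1, …, r+i, -1, …, -i, r+i+1, …, r+d)`. -/
theorem bottom_rows_reduced (d r : ℕ) (hd : 1 ≤ d)
    (i : ℕ) (hi1 : 1 ≤ i) (hid : i ≤ d)
    (u : Equiv.Perm ℤ) (hu : IsSignedPerm (d + r) u)
    (hu1 : ∀ t : ℤ, 1 ≤ t → t ≤ (r : ℤ) → u t = (i : ℤ) + t)
    (hu2 : ∀ t : ℤ, (r : ℤ) < t → t ≤ (r : ℤ) + (i : ℤ) → u t = -(t - r))
    (hu3 : ∀ t : ℤ, (r : ℤ) + (i : ℤ) < t → t ≤ (r : ℤ) + (d : ℤ) → u t = t) :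
    IsReducedWord (d + r) u
      ((List.range i).flatMap fun k => rowWord d r (d - k)) := by
  have hval : ∀ t : ℤ, 1 ≤ t → u t = uValue r i t := by
    intro t ht
    unfold uValue
    split_ifs with h1 h2
    · exact hu1 t ht h1
    · exact hu2 t (by omega) h2
    · rcases le_or_gt t (r + d) with h3 | h3
      · exact hu3 t (by omega) h3
      · exact hu.2 t (by rw [abs_of_pos (by omega)]; push_cast; omega)
  have hlt : ∀ a ∈ bottomRows d r i, a < d + r := fun _ => lt_of_mem_bottomRows hid
  have hprod : wordProd (bottomRows d r i) = u :=
    (isSignedPerm_wordProd hlt).ext_pos hu fun t ht => by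
      rw [wordProd_bottomRows_apply r hid ht, hval t ht]
  rw [← hprod]
  refine isReducedWord_of_length_le_ncard_invSet hlt ?_
  rw [length_bottomRows r hid, hprod]
  exact mul_add_le_ncard_invSet (by omega) hu hval

end BST
end
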